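/- arXiv:0902.1312 — 2 statements merged into one kernel-verified Lean document; each statement's English description precedes it below -/
import Mathlib

section
/- Let H be a non-trivial subgroup of a finite group G, let μ be an irreducible character of H of maximal degree, and let k₊(G,H) be the number of irreducible characters of G not vanishing identically on H^#. Then k₊(G,H) ≤ (μ(1)|H| − μ(1))/(|H| − μ(1)) · max_{h∈H^#} |C_G(h)|. -/
open scoped BigOperators Classical

/-- `χ` is the character of some irreducible complex representation of `G`. -/
def IsIrrChar (G : Type) [Group G] [Fintype G] (χ : G → ℂ) : Prop :=
  ∃ V : FDRep ℂ G, CategoryTheory.Simple V ∧ ∀ g, χ g = V.character g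

/-- `θ` is a generalized (virtual) character: a `ℤ`-linear combination of irreducible characters. -/
def IsVirtualChar (G : Type) [Group G] [Fintype G] (θ : G → ℂ) : Prop :=
  ∃ (n : ℕ) (χ : Fin n → G → ℂ) (a : Fin n → ℤ),
    (∀ i, IsIrrChar G (χ i)) ∧ ∀ g, θ g = ∑ i, (a i : ℂ) * χ i g

/-- The regular character of `G`. -/
noncomputable def regChar (G : Type) [Group G] [Fintype G] : G → ℂ :=
  fun g => if g = 1 then (Fintype.card G : ℂ) else 0

/-- `G` is a Frobenius group with kernel `K` and complement `H`. -/
def IsFrobeniusWith {G : Type} [Group G] (K H : Subgroup G) : Prop :=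
  K.Normal ∧ K ≠ ⊥ ∧ H ≠ ⊥ ∧ K.IsComplement' H ∧
    ∀ h ∈ H, h ≠ 1 → ∀ k ∈ K, h * k * h⁻¹ = k → k = 1

/-!
Write `n = |H|` and `D = μ(1)`. The heart of the matter is the row bound
`n - D ≤ D * ∑ h ≠ 1, |θ h|²` for a virtual character `θ` of `H` not vanishing on all of `H ∖ {1}`.
For irreducible `φ` the defect `φ(1) [θ * conj θ, 1] - [θ * conj θ, φ]` is a nonnegative integer,
and weighting the defects by the degrees gives exactly `∑ h ≠ 1, |θ h|²`. Hence the row bound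
holds as soon as the characters of defect zero, those trivial on the support of `θ`, have Plancherel
mass `z ≤ D`.

If `z > D`, subtract a multiple of the regular character, which changes `θ` only at `1`, so as to
remove the trivial constituent. Then all constituents of defect zero disappear. By the uncertainty
principle the remaining ones have mass `w ≥ z`, while `w + z ≤ n`, so that
`D * (n - D) ≤ w * (n - w)`; integrality of the multiplicities and Parseval's identity bound the
right-hand side by `D² * ∑ h ≠ 1, |θ h|²`.

The theorem follows by summing the row bound over the restrictions to `H` of the characters counted
by `k₊(G, H)`, since `∑ χ, |χ h|² ≤ |C_G(h)|` for every `h`.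
-/

open Finset
open scoped ComplexConjugate

section Representation

universe u

variable {k G : Type*} [Field k]

theorem character_eq_add_of_isCompl [Monoid G] {V : Type*} [AddCommGroup V] [Module k V]
    [FiniteDimensional k V] {ρ : Representation k G V} {p q : Subrepresentation ρ}
    (hpq : IsCompl p.toSubmodule q.toSubmodule) :
    ρ.character = p.toRepresentation.character + q.toRepresentation.character := by
  ext g
  simp only [Representation.character, Pi.add_apply]
  rw [← LinearMap.trace_prodMap', ← LinearMap.trace_conj' _ (Submodule.prodEquivOfIsCompl _ _ hpq)]
  congr 1
  ext v
  obtain ⟨w, rfl⟩ := (Submodule.prodEquivOfIsCompl _ _ hpq).surjective v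
  simp [LinearEquiv.conj_apply, Subrepresentation.toRepresentation]

theorem exists_isCompl_subrepresentation [Group G] [Finite G] [NeZero (Nat.card G : k)]
    {V : Type*} [AddCommGroup V] [Module k V] [Nontrivial V] {ρ : Representation k G V}
    (hρ : ¬ρ.IsIrreducible) :
    ∃ p q : Subrepresentation ρ, p.toSubmodule ≠ ⊥ ∧ q.toSubmodule ≠ ⊥ ∧
      IsCompl p.toSubmodule q.toSubmodule := by
  have : Nontrivial (Subrepresentation ρ) :=
    ⟨⊥, ⊤, fun h ↦ bot_ne_top (α := Submodule k V) (congrArg Subrepresentation.toSubmodule h)⟩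
  obtain ⟨p, hp_bot, hp_top⟩ : ∃ p : Subrepresentation ρ, p ≠ ⊥ ∧ p ≠ ⊤ := by
    by_contra! h
    exact hρ ⟨fun p ↦ or_iff_not_imp_left.mpr (h p)⟩
  obtain ⟨q, hpq⟩ := exists_isCompl p
  refine ⟨p, q, fun h ↦ hp_bot (Subrepresentation.toSubmodule_injective h), fun h ↦ hp_top ?_, ?_⟩
  · have hq : q = ⊥ := Subrepresentation.toSubmodule_injective h
    simpa [hq] using hpq.sup_eq_top
  · exact ⟨disjoint_iff.mpr (congrArg Subrepresentation.toSubmodule hpq.inf_eq_bot),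
      codisjoint_iff.mpr (congrArg Subrepresentation.toSubmodule hpq.sup_eq_top)⟩

theorem character_induction [Group G] [Finite G] [NeZero (Nat.card G : k)] {P : (G → k) → Prop}
    (zero : P 0) (add : ∀ f g, P f → P g → P (f + g))
    (irreducible : ∀ (V : Type u) [AddCommGroup V] [Module k V] [FiniteDimensional k V]
      (ρ : Representation k G V), ρ.IsIrreducible → P ρ.character)
    {V : Type u} [AddCommGroup V] [Module k V] [FiniteDimensional k V]
    (ρ : Representation k G V) : P ρ.character := by
  induction hn : Module.finrank k V using Nat.strong_induction_on generalizing V with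
  | _ n ih =>
    rcases subsingleton_or_nontrivial V with _ | _
    · have hρ : ρ.character = 0 := by
        ext g
        simp [Representation.character, Subsingleton.elim (ρ g) 0]
      rwa [hρ]
    by_cases hρ : ρ.IsIrreducible
    · exact irreducible V ρ hρ
    obtain ⟨p, q, hp, hq, hpq⟩ := exists_isCompl_subrepresentation hρ
    have hp_pos := Submodule.one_le_finrank_iff.mpr hp
    have hq_pos := Submodule.one_le_finrank_iff.mpr hq
    have hsum := Submodule.finrank_add_eq_of_isCompl hpq
    rw [character_eq_add_of_isCompl hpq]
    exact add _ _ (ih _ (by omega) _ rfl) (ih _ (by omega) _ rfl)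

theorem exists_monoidHom_eq_character [Group G] [IsMulCommutative G] [IsAlgClosed k] {V : Type*}
    [AddCommGroup V] [Module k V] [FiniteDimensional k V] (ρ : Representation k G V)
    [ρ.IsIrreducible] : ∃ l : G →* k, ρ.character = l := by
  have hdim := Representation.IsIrreducible.finrank_eq_one_of_isMulCommutative ρ
  have hscalar (x : G) : ρ x = ρ.character x • 1 := by
    obtain ⟨c, hc, -⟩ := (ρ x).existsUnique_eq_smul_id_of_finrank_eq_one hdim
    simp [Representation.character, hc, hdim, Module.End.one_eq_id]
  refine ⟨⟨⟨ρ.character, by simp [hdim]⟩, fun x y ↦ ?_⟩, rfl⟩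
  change LinearMap.trace k V (ρ (x * y)) = _
  rw [map_mul, hscalar x, hscalar y]
  simp [hdim, mul_comm]

theorem character_induction_of_isMulCommutative [Group G] [IsMulCommutative G] [Finite G]
    [NeZero (Nat.card G : k)] [IsAlgClosed k] {P : (G → k) → Prop}
    (zero : P 0) (add : ∀ f g, P f → P g → P (f + g)) (monoidHom : ∀ l : G →* k, P l)
    {V : Type*} [AddCommGroup V] [Module k V] [FiniteDimensional k V]
    (ρ : Representation k G V) : P ρ.character := by
  refine character_induction zero add (fun V _ _ _ σ _ ↦ ?_) ρ
  obtain ⟨l, hl⟩ := exists_monoidHom_eq_character σ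
  exact hl ▸ monoidHom l

variable [Group G] [Finite G]

theorem norm_monoidHom_apply (l : G →* ℂ) (x : G) : ‖l x‖ = 1 :=
  (l.isOfFinOrder (isOfFinOrder_of_finite x)).norm_eq_one

theorem monoidHom_apply_inv (l : G →* ℂ) (x : G) : l x⁻¹ = conj (l x) := by
  rw [← Complex.inv_eq_conj (norm_monoidHom_apply l x)]
  exact eq_inv_of_mul_eq_one_left (by rw [← map_mul, inv_mul_cancel, map_one])

variable {V : Type*} [AddCommGroup V] [Module ℂ V] [FiniteDimensional ℂ V]

theorem character_inv (ρ : Representation ℂ G V) (g : G) :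
    ρ.character g⁻¹ = conj (ρ.character g) := by
  let γ : Subgroup.zpowers g := ⟨g, Subgroup.mem_zpowers g⟩
  exact character_induction_of_isMulCommutative (P := fun f ↦ f γ⁻¹ = conj (f γ)) (by simp)
    (fun f f' hf hf' ↦ by simp [hf, hf']) (fun l ↦ monoidHom_apply_inv l γ)
    (ρ.comp (Subgroup.zpowers g).subtype)

theorem norm_character_le_finrank (ρ : Representation ℂ G V) (g : G) :
    ‖ρ.character g‖ ≤ Module.finrank ℂ V := by
  let γ : Subgroup.zpowers g := ⟨g, Subgroup.mem_zpowers g⟩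
  have hγ := character_induction_of_isMulCommutative (P := fun f ↦ ‖f γ‖ ≤ (f 1).re) (by simp)
    (fun f f' hf hf' ↦ (norm_add_le _ _).trans (add_le_add hf hf'))
    (fun l ↦ by simp [norm_monoidHom_apply]) (ρ.comp (Subgroup.zpowers g).subtype)
  rwa [Representation.char_one, Complex.natCast_re] at hγ

end Representation

section NormalisedInnerProduct

variable {X : Type*} [Fintype X]

/-- Functions on `X` as vectors in Euclidean space, rescaled so that the Hermitian product is the
normalised one `|X|⁻¹ ∑ conj (f g) f' g`. -/
noncomputable def toL2 : (X → ℂ) →ₗ[ℂ] EuclideanSpace ℂ X :=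
  ((√(Fintype.card X : ℝ))⁻¹ : ℂ) • (WithLp.linearEquiv 2 ℂ (X → ℂ)).symm.toLinearMap

theorem inner_toL2 (f f' : X → ℂ) :
    inner ℂ (toL2 f) (toL2 f') = (∑ g, conj (f g) * f' g) / Fintype.card X := by
  have hsqrt : ((√(Fintype.card X : ℝ) : ℂ)) ^ 2 = Fintype.card X := by
    exact_mod_cast Real.sq_sqrt (Nat.cast_nonneg _)
  simp only [toL2, LinearMap.smul_apply, inner_smul_left, inner_smul_right, PiLp.inner_apply]
  rw [← hsqrt, div_eq_inv_mul]
  simp only [map_inv₀, Complex.conj_ofReal, RCLike.inner_apply]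
  rw [← mul_assoc, ← mul_inv, sq]
  congr 1
  exact sum_congr rfl fun g _ ↦ mul_comm _ _

theorem norm_toL2_sq (f : X → ℂ) : ‖toL2 f‖ ^ 2 = (∑ g, ‖f g‖ ^ 2) / Fintype.card X := by
  rw [← inner_self_eq_norm_sq (𝕜 := ℂ), inner_toL2]
  simp_rw [Complex.conj_mul']
  norm_cast

end NormalisedInnerProduct

section IrreducibleCharacters

variable {A : Type} [Group A] [Fintype A]

theorem IsIrrChar.of_isIrreducible {V : Type} [AddCommGroup V] [Module ℂ V]
    [FiniteDimensional ℂ V] (ρ : Representation ℂ A V) [ρ.IsIrreducible] :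
    IsIrrChar A ρ.character := by
  refine ⟨FDRep.of ρ, ?_, fun _ ↦ rfl⟩
  have hcard : (Nat.card A : ℂ) ≠ 0 := NeZero.ne _
  have := invertibleOfNonzero hcard
  have horth := Representation.char_orthonormal ρ ρ
  rw [if_pos ⟨Representation.Equiv.refl ρ⟩] at horth
  field_simp at horth
  exact (FDRep.simple_iff_char_is_norm_one _).mpr horth

theorem isIrrChar_one : IsIrrChar A 1 := by
  have hone (g : A) : (FDRep.of (1 : Representation ℂ A ℂ)).character g = 1 := by
    change LinearMap.trace ℂ ℂ 1 = 1
    simp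
  refine ⟨FDRep.of 1, ?_, fun g ↦ (hone g).symm⟩
  rw [FDRep.simple_iff_char_is_norm_one]
  simp [hone]

theorem IsIrrChar.sum_conj_mul {ψ φ : A → ℂ} (hψ : IsIrrChar A ψ) (hφ : IsIrrChar A φ) :
    ∑ g, conj (ψ g) * φ g = if ψ = φ then (Fintype.card A : ℂ) else 0 := by
  obtain ⟨V, hV, hψV⟩ := hψ
  obtain ⟨W, hW, hφW⟩ := hφ
  obtain rfl : ψ = V.character := funext hψV
  obtain rfl : φ = W.character := funext hφW
  have hconj (g : A) : conj (V.character g) = V.character g⁻¹ := (character_inv V.ρ g).symm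
  simp_rw [hconj, mul_comm (V.character _)]
  split_ifs with h
  · rw [h, (FDRep.simple_iff_char_is_norm_one W).mp hW, Nat.card_eq_fintype_card]
  · have hcard : (Nat.card A : ℂ) ≠ 0 := NeZero.ne _
    have := invertibleOfNonzero hcard
    have horth := FDRep.char_orthonormal W V
    rw [if_neg fun ⟨i⟩ ↦ h (FDRep.char_iso i).symm] at horth
    simpa [hcard] using horth

variable (A) in
/-- The irreducible complex characters of `A`, as a type. -/
abbrev Irr : Type := {ψ : A → ℂ // IsIrrChar A ψ}

instance : CoeFun (Irr A) fun _ ↦ A → ℂ := ⟨Subtype.val⟩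

instance : One (Irr A) := ⟨⟨1, isIrrChar_one⟩⟩

theorem Irr.coe_one : ((1 : Irr A) : A → ℂ) = 1 := rfl

/-- The degree `φ(1)` of an irreducible character, as a natural number: the dimension of a
representation affording it. -/
noncomputable def Irr.degree (φ : Irr A) : ℕ := Module.finrank ℂ φ.2.choose

theorem Irr.apply_one (φ : Irr A) : φ 1 = φ.degree :=
  (φ.2.choose_spec.2 1).trans (FDRep.char_one _)

theorem Irr.norm_apply_le (φ : Irr A) (g : A) : ‖φ g‖ ≤ φ.degree := by
  rw [φ.2.choose_spec.2 g]
  exact norm_character_le_finrank φ.2.choose.ρ g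

theorem Irr.re_apply_le (φ : Irr A) (g : A) : (φ g).re ≤ φ.degree :=
  (Complex.re_le_norm _).trans (φ.norm_apply_le g)

theorem Irr.degree_one : (1 : Irr A).degree = 1 := by
  have h := Irr.apply_one (1 : Irr A)
  rw [Irr.coe_one, Pi.one_apply] at h
  exact_mod_cast h.symm

theorem Irr.orthonormal : Orthonormal ℂ fun φ : Irr A ↦ toL2 φ := by
  rw [orthonormal_iff_ite]
  intro φ ψ
  rw [inner_toL2, φ.2.sum_conj_mul ψ.2]
  simp only [Subtype.ext_iff]
  split_ifs <;> simp

instance : Finite (Irr A) := Irr.orthonormal.linearIndependent.finite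

noncomputable instance : Fintype (Irr A) := Fintype.ofFinite _

theorem inner_toL2_sum (a : Irr A → ℂ) (ψ : Irr A) :
    inner ℂ (toL2 ψ) (toL2 (∑ φ, a φ • (φ : A → ℂ))) = a ψ := by
  simpa only [map_sum, map_smul] using Irr.orthonormal.inner_right_fintype a ψ

theorem sum_norm_sq_sum_smul (S : Finset (Irr A)) (a : Irr A → ℂ) :
    ∑ g, ‖(∑ φ ∈ S, a φ • (φ : A → ℂ)) g‖ ^ 2 = Fintype.card A * ∑ φ ∈ S, ‖a φ‖ ^ 2 := by
  have hnorm : ‖toL2 (∑ φ ∈ S, a φ • (φ : A → ℂ))‖ ^ 2 = ∑ φ ∈ S, ‖a φ‖ ^ 2 := by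
    simp_rw [map_sum, map_smul]
    rw [← inner_self_eq_norm_sq (𝕜 := ℂ), Irr.orthonormal.inner_sum]
    simp_rw [Complex.conj_mul']
    norm_cast
  rw [← hnorm, norm_toL2_sq, mul_div_cancel₀]
  exact_mod_cast Fintype.card_ne_zero

end IrreducibleCharacters

section VirtualCharacters

variable {A : Type} [Group A] [Fintype A]

theorem isVirtualChar_iff_mem_span {θ : A → ℂ} :
    IsVirtualChar A θ ↔ θ ∈ Submodule.span ℤ {ψ | IsIrrChar A ψ} := by
  rw [Submodule.mem_span_set']
  constructor
  · rintro ⟨n, χ, a, hχ, hθ⟩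
    exact ⟨n, a, fun i ↦ ⟨χ i, hχ i⟩, by ext g; simp [hθ]⟩
  · rintro ⟨n, a, χ, rfl⟩
    exact ⟨n, fun i ↦ χ i, a, fun i ↦ (χ i).2, fun g ↦ by simp⟩

theorem isVirtualChar_character {V : Type} [AddCommGroup V] [Module ℂ V] [FiniteDimensional ℂ V]
    (ρ : Representation ℂ A V) : IsVirtualChar A ρ.character :=
  isVirtualChar_iff_mem_span.mpr <| character_induction (Submodule.zero_mem _)
    (fun _ _ ↦ Submodule.add_mem _)
    (fun _ _ _ _ σ _ ↦ Submodule.subset_span (IsIrrChar.of_isIrreducible σ)) ρ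

theorem IsIrrChar.isVirtualChar_comp_subtype {ψ : A → ℂ} (hψ : IsIrrChar A ψ) (H : Subgroup A) :
    IsVirtualChar H fun h ↦ ψ h := by
  obtain ⟨V, -, hV⟩ := hψ
  obtain rfl : ψ = V.character := funext hV
  exact isVirtualChar_character (V.ρ.comp H.subtype)

theorem IsIrrChar.isVirtualChar_mul_star {ψ φ : A → ℂ} (hψ : IsIrrChar A ψ) (hφ : IsIrrChar A φ) :
    IsVirtualChar A (ψ * star φ) := by
  obtain ⟨V, -, hψV⟩ := hψ
  obtain ⟨W, -, hφW⟩ := hφ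
  have hlinHom : ψ * star φ = (Representation.linHom W.ρ V.ρ).character := by
    ext g
    rw [Representation.char_linHom, character_inv, mul_comm]
    simp only [Pi.mul_apply, Pi.star_apply, hψV, hφW]
    rfl
  exact hlinHom ▸ isVirtualChar_character _

theorem IsVirtualChar.mul_star {θ θ' : A → ℂ} (hθ : IsVirtualChar A θ) (hθ' : IsVirtualChar A θ') :
    IsVirtualChar A (θ * star θ') := by
  rw [isVirtualChar_iff_mem_span] at *
  induction hθ, hθ' using Submodule.span_induction₂ with
  | mem_mem ψ φ hψ hφ => exact isVirtualChar_iff_mem_span.mp (hψ.isVirtualChar_mul_star hφ)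
  | zero_left => simp
  | zero_right => simp
  | add_left _ _ _ _ _ _ h h' => simpa [add_mul] using add_mem h h'
  | add_right _ _ _ _ _ _ h h' => simpa [mul_add] using add_mem h h'
  | smul_left a _ _ _ _ h =>
    rw [smul_mul_assoc]
    exact Submodule.smul_mem _ a h
  | smul_right a _ _ _ _ h =>
    rw [star_smul, star_trivial, mul_smul_comm]
    exact Submodule.smul_mem _ a h

theorem IsVirtualChar.exists_eq_sum {θ : A → ℂ} (hθ : IsVirtualChar A θ) :
    ∃ a : Irr A → ℤ, θ = ∑ φ, (a φ : ℂ) • (φ : A → ℂ) := by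
  have hrange : Set.range (Subtype.val : Irr A → A → ℂ) = {ψ | IsIrrChar A ψ} := Subtype.range_val
  rw [isVirtualChar_iff_mem_span, ← hrange, Submodule.mem_span_range_iff_exists_fun] at hθ
  obtain ⟨a, rfl⟩ := hθ
  exact ⟨a, by simp_rw [Int.cast_smul_eq_zsmul]⟩

theorem isVirtualChar_regChar : IsVirtualChar A (regChar A) := by
  let ρ : Representation ℂ A (A → ℂ) :=
    { toFun g := LinearMap.funLeft ℂ ℂ (· * g)
      map_one' := by ext; simp [LinearMap.funLeft]
      map_mul' g h := by ext; simp [LinearMap.funLeft, mul_assoc] }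
  have hρ : ρ.character = regChar A := by
    ext g
    rw [Representation.character, LinearMap.trace_eq_matrix_trace ℂ (Pi.basisFun ℂ A),
      Matrix.trace]
    simp only [Matrix.diag, LinearMap.toMatrix_apply, Pi.basisFun_repr, Pi.basisFun_apply]
    simp [ρ, LinearMap.funLeft, Pi.single_apply, regChar]
  exact hρ ▸ isVirtualChar_character ρ

theorem regChar_eq_sum : regChar A = ∑ φ : Irr A, (φ.degree : ℂ) • (φ : A → ℂ) := by
  obtain ⟨a, ha⟩ := (isVirtualChar_regChar (A := A)).exists_eq_sum
  have hcoeff (φ : Irr A) : (a φ : ℂ) = φ.degree := by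
    rw [← inner_toL2_sum (fun φ ↦ (a φ : ℂ)) φ, ← ha, inner_toL2]
    simp [regChar, φ.apply_one]
  simpa only [hcoeff] using ha

theorem sum_degree_mul_apply (g : A) :
    ∑ φ : Irr A, (φ.degree : ℂ) * φ g = if g = 1 then (Fintype.card A : ℂ) else 0 := by
  simpa [regChar] using (congrFun regChar_eq_sum g).symm

end VirtualCharacters

section PlancherelMass

variable {A : Type} [Group A] [Fintype A] {S : Finset (Irr A)}

/-- The (unnormalised) Plancherel measure of a set of irreducible characters: the dimension of the
part of the regular representation in which they occur. -/
noncomputable def plancherelMass (S : Finset (Irr A)) : ℝ := ∑ φ ∈ S, (φ.degree : ℝ) ^ 2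

theorem plancherelMass_nonneg (S : Finset (Irr A)) : 0 ≤ plancherelMass S :=
  sum_nonneg fun _ _ ↦ sq_nonneg _

theorem plancherelMass_mono {S' : Finset (Irr A)} (h : S ⊆ S') :
    plancherelMass S ≤ plancherelMass S' :=
  sum_le_sum_of_subset_of_nonneg h fun _ _ _ ↦ sq_nonneg _

theorem plancherelMass_univ : plancherelMass (univ : Finset (Irr A)) = Fintype.card A := by
  have h := sum_degree_mul_apply (1 : A)
  simp_rw [Irr.apply_one, ← sq, if_true] at h
  rw [plancherelMass]
  exact_mod_cast h

theorem plancherelMass_le_card (S : Finset (Irr A)) : plancherelMass S ≤ Fintype.card A :=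
  (plancherelMass_mono (subset_univ S)).trans_eq plancherelMass_univ

theorem Irr.degree_sq_le_card (φ : Irr A) : φ.degree ^ 2 ≤ Fintype.card A := by
  have h := plancherelMass_le_card {φ}
  rw [plancherelMass, sum_singleton] at h
  exact_mod_cast h

theorem Irr.degree_lt_card [Nontrivial A] (φ : Irr A) : φ.degree < Fintype.card A := by
  have hsq := φ.degree_sq_le_card
  have hcard := Fintype.one_lt_card (α := A)
  nlinarith

theorem norm_sq_sum_smul_apply_le (S : Finset (Irr A)) (a : Irr A → ℂ) (g : A) :
    ‖(∑ φ ∈ S, a φ • (φ : A → ℂ)) g‖ ^ 2 ≤ (∑ φ ∈ S, ‖a φ‖ ^ 2) * plancherelMass S := by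
  have hnorm : ‖(∑ φ ∈ S, a φ • (φ : A → ℂ)) g‖ ≤ ∑ φ ∈ S, ‖a φ‖ * φ.degree := by
    rw [Finset.sum_apply]
    refine norm_sum_le_of_le _ fun φ _ ↦ ?_
    rw [Pi.smul_apply, norm_smul]
    gcongr
    exact φ.norm_apply_le g
  calc _ ≤ (∑ φ ∈ S, ‖a φ‖ * φ.degree) ^ 2 := by gcongr
    _ ≤ _ := sum_mul_sq_le_sq_mul_sq S _ _

/-- The uncertainty principle for the Fourier transform on `A`. -/
theorem card_le_card_support_mul_plancherelMass {a : Irr A → ℂ}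
    (hne : ∑ φ ∈ S, a φ • (φ : A → ℂ) ≠ 0) :
    Fintype.card A ≤ #{g | (∑ φ ∈ S, a φ • (φ : A → ℂ)) g ≠ 0} * plancherelMass S := by
  set f := ∑ φ ∈ S, a φ • (φ : A → ℂ)
  have hpos : 0 < ∑ φ ∈ S, ‖a φ‖ ^ 2 := by
    refine (sum_nonneg fun _ _ ↦ sq_nonneg _).lt_of_ne' fun h ↦ hne (sum_eq_zero fun φ hφ ↦ ?_)
    have := (sum_eq_zero_iff_of_nonneg fun _ _ ↦ sq_nonneg _).mp h φ hφ
    simp_all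
  refine le_of_mul_le_mul_right ?_ hpos
  calc Fintype.card A * ∑ φ ∈ S, ‖a φ‖ ^ 2
    _ = ∑ g, ‖f g‖ ^ 2 := (sum_norm_sq_sum_smul S a).symm
    _ = ∑ g with f g ≠ 0, ‖f g‖ ^ 2 := (sum_filter_of_ne fun g _ hg ↦ by simpa using hg).symm
    _ ≤ #{g | f g ≠ 0} • ((∑ φ ∈ S, ‖a φ‖ ^ 2) * plancherelMass S) :=
      sum_le_card_nsmul _ _ _ fun g _ ↦ norm_sq_sum_smul_apply_le S a g
    _ = #{g | f g ≠ 0} * plancherelMass S * ∑ φ ∈ S, ‖a φ‖ ^ 2 := by rw [nsmul_eq_mul]; ring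

theorem card_mul_plancherelMass_le {T : Finset A} (h : ∀ φ ∈ S, ∀ g ∈ T, φ g = φ.degree) :
    #T * plancherelMass S ≤ Fintype.card A := by
  rcases (plancherelMass_nonneg S).eq_or_lt with hzero | hpos
  · simp [← hzero]
  refine le_of_mul_le_mul_right ?_ hpos
  let f : A → ℂ := ∑ φ ∈ S, (φ.degree : ℂ) • (φ : A → ℂ)
  have hf : ∀ g ∈ T, f g = plancherelMass S := fun g hg ↦ by
    simp only [f, plancherelMass, Finset.sum_apply, Pi.smul_apply, smul_eq_mul]
    push_cast
    exact sum_congr rfl fun φ hφ ↦ by rw [h φ hφ g hg, sq]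
  calc #T * plancherelMass S * plancherelMass S
    _ = ∑ g ∈ T, ‖f g‖ ^ 2 := by
      rw [sum_congr rfl fun g hg ↦ by rw [hf g hg, Complex.norm_real, Real.norm_eq_abs, sq_abs],
        sum_const, nsmul_eq_mul]
      ring
    _ ≤ ∑ g, ‖f g‖ ^ 2 := sum_le_sum_of_subset_of_nonneg (subset_univ T) fun _ _ _ ↦ sq_nonneg _
    _ = Fintype.card A * plancherelMass S := by
      rw [sum_norm_sq_sum_smul]
      simp [plancherelMass]

theorem card_sub_plancherelMass_mul_le (S : Finset (Irr A)) (a : Irr A → ℂ) :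
    (Fintype.card A - plancherelMass S) * ∑ φ ∈ S, ‖a φ‖ ^ 2 ≤
      ∑ g with g ≠ 1, ‖(∑ φ ∈ S, a φ • (φ : A → ℂ)) g‖ ^ 2 := by
  have hparseval := sum_norm_sq_sum_smul S a
  rw [← sum_erase_add _ _ (mem_univ 1)] at hparseval
  have hone := norm_sq_sum_smul_apply_le S a 1
  rw [filter_ne']
  linarith

theorem plancherelMass_le_of_ne_zero {a : Irr A → ℤ} {D : ℕ} (hS : ∀ φ ∈ S, a φ ≠ 0)
    (hD : ∀ φ ∈ S, φ.degree ≤ D) :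
    plancherelMass S ≤ D ^ 2 * ∑ φ ∈ S, ‖(a φ : ℂ)‖ ^ 2 := by
  rw [plancherelMass, mul_sum]
  refine sum_le_sum fun φ hφ ↦ ?_
  have hone_le : (1 : ℝ) ≤ (a φ : ℝ) ^ 2 :=
    mod_cast (one_le_sq_iff_one_le_abs _).mpr (Int.one_le_abs (hS φ hφ))
  have hdeg : (φ.degree : ℝ) ≤ D := mod_cast hD φ hφ
  calc (φ.degree : ℝ) ^ 2 ≤ (D : ℝ) ^ 2 * 1 := by rw [mul_one]; gcongr
    _ ≤ D ^ 2 * ‖(a φ : ℂ)‖ ^ 2 := by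
      rw [Complex.norm_intCast, sq_abs]
      gcongr

theorem plancherelMass_mul_card_sub_le {a : Irr A → ℤ} {D : ℕ} (hS : ∀ φ ∈ S, a φ ≠ 0)
    (hD : ∀ φ ∈ S, φ.degree ≤ D) :
    plancherelMass S * (Fintype.card A - plancherelMass S) ≤
      D ^ 2 * ∑ g with g ≠ 1, ‖(∑ φ ∈ S, (a φ : ℂ) • (φ : A → ℂ)) g‖ ^ 2 := by
  have hcard : 0 ≤ Fintype.card A - plancherelMass S := sub_nonneg.mpr (plancherelMass_le_card S)
  calc plancherelMass S * (Fintype.card A - plancherelMass S)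
    _ ≤ D ^ 2 * (∑ φ ∈ S, ‖(a φ : ℂ)‖ ^ 2) * (Fintype.card A - plancherelMass S) := by
      gcongr
      exact plancherelMass_le_of_ne_zero hS hD
    _ = D ^ 2 * ((Fintype.card A - plancherelMass S) * ∑ φ ∈ S, ‖(a φ : ℂ)‖ ^ 2) := by ring
    _ ≤ _ := by
      gcongr
      exact card_sub_plancherelMass_mul_le S _

end PlancherelMass

section RowBound

variable {A : Type} [Group A] [Fintype A] {θ : A → ℂ}

/-- For a virtual character `θ`, the amount by which the multiplicity of `φ` in `θ * star θ` falls
short of `φ(1)` times the multiplicity of the trivial character. -/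
noncomputable def defect (θ : A → ℂ) (φ : Irr A) : ℝ :=
  (∑ g, ‖θ g‖ ^ 2 * (φ.degree - (φ g).re)) / Fintype.card A

theorem norm_sq_mul_degree_sub_re_nonneg (θ : A → ℂ) (φ : Irr A) (g : A) :
    0 ≤ ‖θ g‖ ^ 2 * (φ.degree - (φ g).re) :=
  mul_nonneg (sq_nonneg _) (sub_nonneg.mpr (φ.re_apply_le g))

theorem defect_nonneg (θ : A → ℂ) (φ : Irr A) : 0 ≤ defect θ φ :=
  div_nonneg (sum_nonneg fun g _ ↦ norm_sq_mul_degree_sub_re_nonneg θ φ g) (Nat.cast_nonneg _)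

theorem Irr.apply_eq_degree_of_re_eq {φ : Irr A} {g : A} (h : (φ g).re = φ.degree) :
    φ g = φ.degree := by
  have hnorm : |(φ g).re| = ‖φ g‖ :=
    le_antisymm (Complex.abs_re_le_norm _) (by simpa [h] using φ.norm_apply_le g)
  exact Complex.ext (by simpa using h) (by simpa using Complex.abs_re_eq_norm.mp hnorm)

/-- The irreducible characters whose kernel contains the support of `θ`, encoded as those of
defect zero. -/
noncomputable def zeroDefect (θ : A → ℂ) : Finset (Irr A) := {φ | defect θ φ = 0}

theorem mem_zeroDefect {φ : Irr A} : φ ∈ zeroDefect θ ↔ defect θ φ = 0 := by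
  simp [zeroDefect]

theorem apply_eq_degree_of_mem_zeroDefect {φ : Irr A} (hφ : φ ∈ zeroDefect θ) {g : A}
    (hg : θ g ≠ 0) : φ g = φ.degree := by
  have hcard : (Fintype.card A : ℝ) ≠ 0 := mod_cast Fintype.card_ne_zero
  have hsum := (div_eq_zero_iff.mp (mem_zeroDefect.mp hφ)).resolve_right hcard
  have hterm := (sum_eq_zero_iff_of_nonneg
    fun g _ ↦ norm_sq_mul_degree_sub_re_nonneg θ φ g).mp hsum g (mem_univ g)
  have hre := (mul_eq_zero.mp hterm).resolve_left (by simpa using hg)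
  exact Irr.apply_eq_degree_of_re_eq (sub_eq_zero.mp hre).symm

theorem apply_eq_degree_of_eq_off_one {f : A → ℂ} (hf : ∀ g ≠ 1, f g = θ g) {φ : Irr A}
    (hφ : φ ∈ zeroDefect θ) {g : A} (hg : f g ≠ 0) : φ g = φ.degree := by
  by_cases hg₁ : g = 1
  · exact hg₁ ▸ φ.apply_one
  · exact apply_eq_degree_of_mem_zeroDefect hφ (hf g hg₁ ▸ hg)

theorem IsVirtualChar.exists_int_sum_norm_sq_mul_re (hθ : IsVirtualChar A θ) (φ : Irr A) :
    ∃ b : ℤ, (∑ g, ‖θ g‖ ^ 2 * (φ g).re) / Fintype.card A = b := by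
  obtain ⟨b, hb⟩ := (hθ.mul_star hθ).exists_eq_sum
  refine ⟨b φ, ?_⟩
  have hinner := congrArg Complex.re (inner_toL2_sum (fun φ ↦ (b φ : ℂ)) φ)
  rw [← hb, inner_toL2, Complex.intCast_re, Complex.div_natCast_re, Complex.re_sum] at hinner
  rw [← hinner]
  congr 1
  refine sum_congr rfl fun g _ ↦ ?_
  rw [Pi.mul_apply, Pi.star_apply, Complex.star_def, Complex.mul_conj', ← Complex.ofReal_pow,
    Complex.re_mul_ofReal, Complex.conj_re, mul_comm]

theorem IsVirtualChar.exists_int_eq_defect (hθ : IsVirtualChar A θ) (φ : Irr A) :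
    ∃ c : ℤ, defect θ φ = c := by
  obtain ⟨b₁, hb₁⟩ := hθ.exists_int_sum_norm_sq_mul_re 1
  obtain ⟨b, hb⟩ := hθ.exists_int_sum_norm_sq_mul_re φ
  refine ⟨b₁ * φ.degree - b, ?_⟩
  push_cast
  rw [← hb₁, ← hb, defect, div_mul_eq_mul_div, ← sub_div, sum_mul, ← sum_sub_distrib]
  simp [Irr.coe_one, mul_sub]

theorem IsVirtualChar.one_le_defect (hθ : IsVirtualChar A θ) {φ : Irr A} (h : defect θ φ ≠ 0) :
    1 ≤ defect θ φ := by
  obtain ⟨c, hc⟩ := hθ.exists_int_eq_defect φ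
  have hpos : 0 < defect θ φ := (defect_nonneg θ φ).lt_of_ne' h
  rw [hc] at hpos ⊢
  exact_mod_cast hpos

theorem sum_degree_mul_degree_sub_re (g : A) :
    ∑ φ : Irr A, (φ.degree : ℝ) * (φ.degree - (φ g).re) =
      if g = 1 then 0 else (Fintype.card A : ℝ) := by
  have hg := congrArg Complex.re (sum_degree_mul_apply g)
  have hmass := plancherelMass_univ (A := A)
  simp only [Complex.re_sum, ← Complex.ofReal_natCast, Complex.re_ofReal_mul] at hg
  simp_rw [mul_sub, sum_sub_distrib, ← sq, hg]
  rw [← plancherelMass, hmass]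
  split_ifs <;> simp

theorem sum_degree_mul_defect (θ : A → ℂ) :
    ∑ φ : Irr A, φ.degree * defect θ φ = ∑ g with g ≠ 1, ‖θ g‖ ^ 2 := by
  have hcard : (Fintype.card A : ℝ) ≠ 0 := mod_cast Fintype.card_ne_zero
  simp_rw [defect, mul_div_assoc', ← sum_div, mul_sum, mul_left_comm (_ : ℝ) (‖_‖ ^ 2)]
  rw [sum_comm]
  simp_rw [← mul_sum, sum_degree_mul_degree_sub_re, mul_ite, mul_zero]
  rw [div_eq_iff hcard, sum_mul, sum_filter]
  exact sum_congr rfl fun g _ ↦ by split_ifs <;> simp_all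

theorem IsVirtualChar.card_sub_plancherelMass_le (hθ : IsVirtualChar A θ) {D : ℕ}
    (hD : ∀ φ : Irr A, φ.degree ≤ D) :
    Fintype.card A - plancherelMass (zeroDefect θ) ≤
      D * ∑ g with g ≠ 1, ‖θ g‖ ^ 2 := by
  rw [← plancherelMass_univ, plancherelMass, plancherelMass,
    ← sum_sdiff (subset_univ (zeroDefect θ)), add_sub_cancel_right, ← sum_degree_mul_defect,
    mul_sum]
  calc ∑ φ ∈ univ \ zeroDefect θ, (φ.degree : ℝ) ^ 2
    _ ≤ ∑ φ ∈ univ \ zeroDefect θ, D * (φ.degree * defect θ φ) := by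
      refine sum_le_sum fun φ hφ ↦ ?_
      have hone := hθ.one_le_defect (mt mem_zeroDefect.mpr (mem_sdiff.mp hφ).2)
      have hdeg : (φ.degree : ℝ) ≤ D := mod_cast hD φ
      rw [sq]
      gcongr
      exact le_mul_of_one_le_right (Nat.cast_nonneg _) hone
    _ ≤ ∑ φ, D * (φ.degree * defect θ φ) :=
      sum_le_sum_of_subset_of_nonneg sdiff_subset fun φ _ _ ↦ by
        have := defect_nonneg θ φ
        positivity

theorem coeff_eq_degree_mul_coeff_one {a : Irr A → ℂ} {ψ : Irr A}
    (h : ∀ g, (∑ φ, a φ • (φ : A → ℂ)) g ≠ 0 → ψ g = ψ.degree) : a ψ = ψ.degree * a 1 := by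
  rw [← inner_toL2_sum a ψ, ← inner_toL2_sum a 1, inner_toL2, inner_toL2, mul_div_assoc', mul_sum]
  congr 1
  refine sum_congr rfl fun g _ ↦ ?_
  by_cases hg : (∑ φ, a φ • (φ : A → ℂ)) g = 0
  · simp [hg]
  · simp [h g hg, Irr.coe_one]

theorem IsVirtualChar.exists_eq_sum_of_ne_one (hθ : IsVirtualChar A θ) :
    ∃ a : Irr A → ℤ, a 1 = 0 ∧ ∀ g ≠ 1, (∑ φ, (a φ : ℂ) • (φ : A → ℂ)) g = θ g := by
  obtain ⟨m, hm⟩ := hθ.exists_eq_sum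
  refine ⟨fun φ ↦ m φ - m 1 * φ.degree, by simp [Irr.degree_one], fun g hg ↦ ?_⟩
  have hreg := sum_degree_mul_apply g
  rw [if_neg hg] at hreg
  simp [hm, sub_mul, mul_assoc, ← mul_sum, hreg]

theorem plancherelMass_zeroDefect_le {S : Finset (Irr A)} {a : Irr A → ℂ}
    (hne : ∑ φ ∈ S, a φ • (φ : A → ℂ) ≠ 0)
    (hθ : ∀ g ≠ 1, (∑ φ ∈ S, a φ • (φ : A → ℂ)) g = θ g) :
    plancherelMass (zeroDefect θ) ≤ plancherelMass S := by
  set f := ∑ φ ∈ S, a φ • (φ : A → ℂ)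
  have hsupport : (0 : ℝ) < #{g | f g ≠ 0} := by
    obtain ⟨g, hg⟩ := Function.ne_iff.mp hne
    exact_mod_cast card_pos.mpr ⟨g, by simpa using hg⟩
  refine le_of_mul_le_mul_left ?_ hsupport
  calc #{g | f g ≠ 0} * plancherelMass (zeroDefect θ)
    _ ≤ Fintype.card A := card_mul_plancherelMass_le fun φ hφ g hg ↦
      apply_eq_degree_of_eq_off_one hθ hφ (mem_filter.mp hg).2
    _ ≤ #{g | f g ≠ 0} * plancherelMass S := card_le_card_support_mul_plancherelMass hne

theorem IsVirtualChar.card_sub_le (hθ : IsVirtualChar A θ) (hne : ∃ g, g ≠ 1 ∧ θ g ≠ 0) {D : ℕ}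
    (hD : ∀ φ : Irr A, φ.degree ≤ D) :
    (Fintype.card A : ℝ) - D ≤ D * ∑ g with g ≠ 1, ‖θ g‖ ^ 2 := by
  rcases le_or_gt (plancherelMass (zeroDefect θ)) D with hz | hz
  · linarith [hθ.card_sub_plancherelMass_le hD]
  obtain ⟨a, ha₁, ha⟩ := hθ.exists_eq_sum_of_ne_one
  let S : Finset (Irr A) := {φ | a φ ≠ 0}
  have hsum_S : ∑ φ, (a φ : ℂ) • (φ : A → ℂ) = ∑ φ ∈ S, (a φ : ℂ) • (φ : A → ℂ) :=
    (sum_filter_of_ne fun φ _ h h₀ ↦ by simp [h₀] at h).symm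
  have hdisj : Disjoint S (zeroDefect θ) := disjoint_left.mpr fun φ hφS hφZ ↦
    (mem_filter.mp hφS).2 <| by simpa [ha₁] using
      coeff_eq_degree_mul_coeff_one fun g ↦ apply_eq_degree_of_eq_off_one ha hφZ
  have hadd : plancherelMass S + plancherelMass (zeroDefect θ) ≤ Fintype.card A := by
    simpa only [plancherelMass, sum_union hdisj] using plancherelMass_le_card (S ∪ zeroDefect θ)
  rw [hsum_S] at ha
  have hle : plancherelMass (zeroDefect θ) ≤ plancherelMass S := by
    obtain ⟨g, hg, hθg⟩ := hne
    exact plancherelMass_zeroDefect_le (Function.ne_iff.mpr ⟨g, (ha g hg).trans_ne hθg⟩) ha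
  have hmul := plancherelMass_mul_card_sub_le (S := S) (a := a)
    (fun φ hφ ↦ (mem_filter.mp hφ).2) fun φ _ ↦ hD φ
  rw [sum_congr rfl fun g hg ↦ by rw [ha g (mem_filter.mp hg).2]] at hmul
  have hDpos : (0 : ℝ) < D := by
    have hone := hD 1
    rw [Irr.degree_one] at hone
    exact_mod_cast hone
  refine le_of_mul_le_mul_left ?_ hDpos
  calc (D : ℝ) * (Fintype.card A - D)
    _ ≤ plancherelMass S * (Fintype.card A - plancherelMass S) := by nlinarith
    _ ≤ D * (D * ∑ g with g ≠ 1, ‖θ g‖ ^ 2) := by linarith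

end RowBound

section KPlus

variable {G : Type} [Group G] [Fintype G]

theorem card_conjugatesOf_mul_card_centralizer (h : G) :
    #{g | IsConj h g} * Nat.card (Subgroup.centralizer {h}) = Fintype.card G := by
  have horbit := MulAction.card_orbit_mul_card_stabilizer_eq_card_group (ConjAct G) h
  rw [ConjAct.card] at horbit
  rw [Subgroup.nat_card_centralizer_nat_card_stabilizer, Nat.card_eq_fintype_card, ← horbit,
    ← Fintype.card_subtype]
  congr 1
  exact Fintype.card_congr (Equiv.subtypeEquivRight fun g ↦ by
    rw [ConjAct.mem_orbit_conjAct, isConj_comm])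

theorem IsIrrChar.apply_eq_of_isConj {ψ : G → ℂ} (hψ : IsIrrChar G ψ) {g h : G}
    (hgh : IsConj g h) : ψ g = ψ h := by
  obtain ⟨V, -, hV⟩ := hψ
  obtain ⟨x, rfl⟩ := isConj_iff.mp hgh
  rw [hV, hV, FDRep.char_conj]

theorem sum_norm_sq_apply_le_card_centralizer (S : Finset (Irr G)) (h : G) :
    ∑ φ ∈ S, ‖φ h‖ ^ 2 ≤ Nat.card (Subgroup.centralizer {h}) := by
  let f : G → ℂ := fun g ↦ if IsConj h g then 1 else 0
  let m := #{g | IsConj h g}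
  have hm : (0 : ℝ) < m := mod_cast card_pos.mpr ⟨h, mem_filter.mpr ⟨mem_univ h, IsConj.refl h⟩⟩
  have hcard : (m * Nat.card (Subgroup.centralizer {h}) : ℝ) = Fintype.card G :=
    mod_cast card_conjugatesOf_mul_card_centralizer h
  have hinner (φ : Irr G) : inner ℂ (toL2 φ) (toL2 f) = m * conj (φ h) / Fintype.card G := by
    rw [inner_toL2]
    simp_rw [f, mul_ite, mul_one, mul_zero]
    rw [← sum_filter, sum_congr rfl fun g hg ↦ by
      rw [← φ.2.apply_eq_of_isConj (mem_filter.mp hg).2], sum_const, nsmul_eq_mul]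
  have hnorm : ‖toL2 f‖ ^ 2 = m / Fintype.card G := by
    simp [norm_toL2_sq, f, m, apply_ite]
  have hbessel : (m / Fintype.card G : ℝ) ^ 2 * ∑ φ ∈ S, ‖φ h‖ ^ 2 ≤ m / Fintype.card G := by
    have := Irr.orthonormal.sum_inner_products_le (toL2 f) (s := S)
    simpa only [hinner, hnorm, norm_div, norm_mul, Complex.norm_natCast, Complex.norm_conj,
      mul_div_right_comm, mul_pow, ← mul_sum] using this
  have hn : (0 : ℝ) < Fintype.card G := mod_cast Fintype.card_pos
  refine le_of_mul_le_mul_left (hbessel.trans_eq ?_) (pow_pos (div_pos hm hn) 2)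
  rw [sq, mul_assoc, div_mul_eq_mul_div _ _ (Nat.card _ : ℝ), hcard, div_self hn.ne', mul_one]

/-- The number `k₊(G, H)` of irreducible characters of `G` that do not vanish identically on the
nonidentity elements of `H`. -/
noncomputable def kPlus (H : Subgroup G) : ℕ := #{φ : Irr G | ∃ h ∈ H, h ≠ 1 ∧ φ h ≠ 0}

theorem kPlus_mul_card_sub_le (H : Subgroup G) {D : ℕ} (hD : ∀ ψ : Irr H, ψ.degree ≤ D) :
    kPlus H * (Fintype.card H - D : ℝ) ≤
      D * ∑ h : H with h ≠ 1, (Nat.card (Subgroup.centralizer {(h : G)}) : ℝ) := by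
  rw [kPlus, ← nsmul_eq_mul]
  set K : Finset (Irr G) := {φ | ∃ h ∈ H, h ≠ 1 ∧ φ h ≠ 0}
  calc #K • (Fintype.card H - D : ℝ)
    _ ≤ ∑ φ ∈ K, D * ∑ h : H with h ≠ 1, ‖φ h‖ ^ 2 := by
      refine card_nsmul_le_sum K _ _ fun φ hφ ↦ ?_
      obtain ⟨h, hH, hne, hφh⟩ := (mem_filter.mp hφ).2
      have hrow := (φ.2.isVirtualChar_comp_subtype H).card_sub_le
        ⟨⟨h, hH⟩, by simpa using hne, hφh⟩ hD
      exact hrow.trans_eq (by congr!)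
    _ = D * ∑ h : H with h ≠ 1, ∑ φ ∈ K, ‖φ h‖ ^ 2 := by rw [← mul_sum, sum_comm]
    _ ≤ _ := by
      gcongr
      exact sum_norm_sq_apply_le_card_centralizer K _

theorem card_filter_eq_kPlus (H : Subgroup G) {ι : Type*} [Fintype ι] {χ : ι → G → ℂ}
    (hirr : ∀ i, IsIrrChar G (χ i)) (hinj : Function.Injective χ)
    (hcompl : ∀ ψ : G → ℂ, IsIrrChar G ψ → ∃ i, ψ = χ i) :
    #{i | ∃ h ∈ H, h ≠ 1 ∧ χ i h ≠ 0} = kPlus H := by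
  let e : ι ≃ Irr G := Equiv.ofBijective (fun i ↦ ⟨χ i, hirr i⟩)
    ⟨fun i j hij ↦ hinj (congrArg Subtype.val hij),
      fun φ ↦ (hcompl φ φ.2).imp fun _ h ↦ Subtype.ext h.symm⟩
  exact card_equiv e fun i ↦ by simp only [mem_filter, mem_univ, true_and]; rfl

end KPlus

/-- Corollary 3: a bound for `k₊(G,H)`. -/
theorem stmt9 (G : Type) [Group G] [Fintype G] (H : Subgroup G) (hH : H ≠ ⊥)
    (μ : ↥H → ℂ) (hμ : IsIrrChar ↥H μ) (d : ℕ) (hdeg : μ 1 = (d : ℂ))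
    (hmax : IsGreatest {n : ℕ | ∃ ψ : ↥H → ℂ, IsIrrChar ↥H ψ ∧ ψ 1 = (n : ℂ)} d)
    (k : ℕ) (χ : Fin k → G → ℂ) (hirr : ∀ i, IsIrrChar G (χ i))
    (hinj : Function.Injective χ) (hcompl : ∀ ψ : G → ℂ, IsIrrChar G ψ → ∃ i, ψ = χ i)
    (M : ℕ)
    (hM : IsGreatest {n : ℕ | ∃ h ∈ H, h ≠ 1 ∧ n = Nat.card (Subgroup.centralizer {h})} M) :
    ((Finset.univ.filter (fun i => ∃ h ∈ H, h ≠ 1 ∧ χ i h ≠ 0)).card : ℝ) ≤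
      ((d : ℝ) * Fintype.card H - d) / ((Fintype.card H : ℝ) - d) * M := by
  have : Nontrivial H := (Subgroup.nontrivial_iff_ne_bot H).mpr hH
  have hdegree_le (ψ : Irr H) : ψ.degree ≤ d := hmax.2 ⟨ψ, ψ.2, ψ.apply_one⟩
  have hd_lt : (d : ℝ) < Fintype.card H := by
    let φ : Irr H := ⟨μ, hμ⟩
    have hd : φ.degree = d := mod_cast φ.apply_one.symm.trans hdeg
    exact_mod_cast hd ▸ φ.degree_lt_card
  have hcentralizer : ∑ h : H with h ≠ 1, (Nat.card (Subgroup.centralizer {(h : G)}) : ℝ) ≤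
      (Fintype.card H - 1) * M := by
    have hle : ∀ h ∈ ({h | h ≠ 1} : Finset H), Nat.card (Subgroup.centralizer {(h : G)}) ≤ M :=
      fun h hh ↦ hM.2 ⟨h, h.2, by simpa using hh, rfl⟩
    have := sum_le_card_nsmul _ _ (M : ℝ) fun h hh ↦ Nat.cast_le (α := ℝ).mpr (hle h hh)
    simpa [filter_ne', card_erase_of_mem, Nat.cast_sub Fintype.card_pos] using this
  rw [card_filter_eq_kPlus H hirr hinj hcompl, div_mul_eq_mul_div, le_div_iff₀ (sub_pos.mpr hd_lt)]
  calc kPlus H * (Fintype.card H - d : ℝ)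
    _ ≤ d * ∑ h : H with h ≠ 1, (Nat.card (Subgroup.centralizer {(h : G)}) : ℝ) :=
      kPlus_mul_card_sub_le H hdegree_le
    _ ≤ d * ((Fintype.card H - 1) * M) := by gcongr
    _ = (d * Fintype.card H - d) * M := by ring
end

section
/- Let G be a Frobenius group with kernel K such that every irreducible character of G not containing K in its kernel has degree [G:K]. Then every non-trivial irreducible character of K is linear, and hence K is Abelian. -/
open scoped BigOperators Classical

/-!
For an irreducible representation `ρ` of degree `d`, averaging over conjugates and then over
characters shows that `∑ ρ ⁅x, y⁆`, over all pairs `(x, y)`, is the scalar `(|G| / d) ^ 2`.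

* This scalar is integral over `ℤ`, so `d` divides `|G|`.
* If every irreducible representation nontrivial on a normal subgroup `K` has degree `[G : K]`, then
  `u = ∑ ⁅x, y⁆` and `s = ∑ x ∈ K, x` satisfy `u (|K| - s) = |K| ^ 2 (|K| - s)` in the group
  algebra, since both sides agree on every irreducible representation. Comparing coefficients at
  `1` counts commuting pairs and gives `[G : K] (c(G) - c(G / K)) = |K| - 1`, where `c` is the
  number of conjugacy classes. Hence `[G : K]` and `|K|` are coprime.
* By Clifford's argument, the degree of an irreducible constituent `W` of the restriction to `K` of
  an irreducible representation nontrivial on `K` divides `[G : K]`; it also divides `|K|`, so it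
  is `1`. Thus `⁅K, K⁆` fixes `W`, and being normal it acts trivially on the whole representation.
  As it acts trivially on every irreducible representation of `G`, it is trivial.
-/

section

open Module
open scoped MonoidAlgebra commutatorElement

universe u v

section Schur

lemma nontrivial_of_isIrreducible {k G V : Type*} [Field k] [Monoid G] [AddCommGroup V]
    [Module k V] (ρ : Representation k G V) [ρ.IsIrreducible] : Nontrivial V :=
  IsSimpleModule.nontrivial k[G] ρ.asModule

lemma finrank_smul_eq_trace_smul_one {k G V : Type*} [Field k] [IsAlgClosed k] [Monoid G]
    [AddCommGroup V] [Module k V] [FiniteDimensional k V] (ρ : Representation k G V)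
    [ρ.IsIrreducible] {T : End k V} (hT : ∀ g, Commute T (ρ g)) :
    (finrank k V : k) • T = LinearMap.trace k V T • (1 : End k V) := by
  obtain ⟨c, hc⟩ :=
    (Representation.IsIrreducible.algebraMap_intertwiningMap_bijective_of_isAlgClosed
      (ρ := ρ)).2 ⟨T, hT⟩
  obtain rfl : c • (1 : End k V) = T := congrArg (·.toLinearMap) hc
  rw [map_smul, LinearMap.trace_one, smul_smul, smul_eq_mul, mul_comm]

variable {k G V : Type*} [Field k] [IsAlgClosed k] [Group G] [Fintype G] [AddCommGroup V]
  [Module k V] [FiniteDimensional k V] (ρ : Representation k G V) [ρ.IsIrreducible]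

lemma finrank_smul_sum_conj (x : G) :
    (finrank k V : k) • ∑ g, ρ (g * x * g⁻¹) =
      (Nat.card G * ρ.character x) • (1 : End k V) := by
  have hcomm (y : G) : Commute (∑ g, ρ (g * x * g⁻¹)) (ρ y) := by
    rw [Commute, SemiconjBy, Finset.sum_mul, Finset.mul_sum]
    refine Fintype.sum_equiv (Equiv.mulLeft y⁻¹) _ _ fun g => ?_
    simp only [← map_mul, Equiv.coe_mulLeft]
    group
  have htrace : LinearMap.trace k V (∑ g, ρ (g * x * g⁻¹)) = Nat.card G * ρ.character x := by
    have hconj (g : G) : LinearMap.trace k V (ρ (g * x * g⁻¹)) = ρ.character x := ρ.char_conj x g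
    simp only [map_sum, hconj, Finset.sum_const, nsmul_eq_mul, Finset.card_univ,
      Nat.card_eq_fintype_card]
  rw [finrank_smul_eq_trace_smul_one ρ hcomm, htrace]

variable [NeZero (Nat.card G : k)]

lemma sum_character_mul_character_inv :
    ∑ g, ρ.character g * ρ.character g⁻¹ = (Nat.card G : k) := by
  have := invertibleOfNonzero (NeZero.ne (Nat.card G : k))
  have horth := Representation.char_orthonormal ρ ρ
  rwa [if_pos ⟨Representation.Equiv.refl ρ⟩, inv_mul_eq_one₀ (NeZero.ne _), eq_comm] at horth

lemma finrank_smul_sum_character_smul_inv :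
    (finrank k V : k) • ∑ x, ρ.character x • ρ x⁻¹ = (Nat.card G : k) • (1 : End k V) := by
  have hcomm (y : G) : Commute (∑ x, ρ.character x • ρ x⁻¹) (ρ y) := by
    rw [Commute, SemiconjBy, Finset.sum_mul, Finset.mul_sum]
    refine Fintype.sum_equiv (MulAut.conj y⁻¹).toEquiv _ _ fun x => ?_
    simp only [smul_mul_assoc, mul_smul_comm, ← map_mul, MulEquiv.toEquiv_eq_coe,
      MulEquiv.coe_toEquiv, MulAut.conj_apply, ρ.char_conj]
    group
  have htrace : LinearMap.trace k V (∑ x, ρ.character x • ρ x⁻¹) = Nat.card G := by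
    simp only [← sum_character_mul_character_inv ρ, map_sum, map_smul, smul_eq_mul]
    rfl
  rw [finrank_smul_eq_trace_smul_one ρ hcomm, htrace]

lemma finrank_sq_smul_sum_commutator :
    (finrank k V : k) ^ 2 • ∑ p : G × G, ρ ⁅p.1, p.2⁆ = (Nat.card G : k) ^ 2 • (1 : End k V) := by
  calc (finrank k V : k) ^ 2 • ∑ p : G × G, ρ ⁅p.1, p.2⁆
      = (finrank k V : k) • ∑ x, ((finrank k V : k) • ∑ g, ρ (g * x * g⁻¹)) * ρ x⁻¹ := by
        simp only [Fintype.sum_prod_type_right, commutatorElement_def, map_mul, sq, mul_smul,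
          Finset.smul_sum, Finset.sum_mul, smul_mul_assoc]
    _ = (Nat.card G : k) • (finrank k V : k) • ∑ x, ρ.character x • ρ x⁻¹ := by
        simp only [finrank_smul_sum_conj, mul_smul, smul_mul_assoc, one_mul, ← Finset.smul_sum]
        rw [smul_comm]
    _ = (Nat.card G : k) ^ 2 • (1 : End k V) := by
        rw [finrank_smul_sum_character_smul_inv, smul_smul, sq]

end Schur

theorem finrank_dvd_card {k G V : Type*} [Field k] [IsAlgClosed k] [CharZero k] [Group G]
    [Finite G] [AddCommGroup V] [Module k V] [FiniteDimensional k V] (ρ : Representation k G V)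
    [ρ.IsIrreducible] : finrank k V ∣ Nat.card G := by
  have := Fintype.ofFinite G
  have := nontrivial_of_isIrreducible ρ
  have hd : (finrank k V : k) ≠ 0 := by exact_mod_cast finrank_pos.ne'
  have hint : IsIntegral ℤ (∑ p : G × G, ρ ⁅p.1, p.2⁆) := by
    have := (Algebra.IsIntegral.isIntegral (R := ℤ)
      (∑ p : G × G, MonoidAlgebra.single ⁅p.1, p.2⁆ (1 : ℤ))).map (MonoidAlgebra.lift ℤ _ G ρ)
    simpa using this
  set q : ℚ := (Nat.card G / finrank k V : ℚ) ^ 2 with hq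
  have hscalar : ∑ p : G × G, ρ ⁅p.1, p.2⁆ = algebraMap k (End k V) (algebraMap ℚ k q) := by
    rw [eq_inv_smul_iff₀ (pow_ne_zero 2 hd) |>.2 (finrank_sq_smul_sum_commutator ρ), smul_smul,
      Algebra.algebraMap_eq_smul_one]
    congr 1
    rw [hq, map_pow, map_div₀, map_natCast, map_natCast]
    field_simp
  rw [hscalar, isIntegral_algebraMap_iff (algebraMap k (End k V)).injective,
    isIntegral_algebraMap_iff (algebraMap ℚ k).injective] at hint
  obtain ⟨m, hm⟩ := IsIntegrallyClosed.isIntegral_iff.1 hint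
  have hd' : (finrank k V : ℚ) ≠ 0 := by exact_mod_cast finrank_pos.ne'
  rw [hq, div_pow, eq_div_iff (pow_ne_zero 2 hd'), eq_intCast] at hm
  have : (finrank k V : ℤ) ^ 2 ∣ (Nat.card G : ℤ) ^ 2 := Dvd.intro_left m (by exact_mod_cast hm)
  exact_mod_cast Int.pow_dvd_pow_iff two_ne_zero |>.1 this

section GroupAlgebra

variable {k : Type u} {G : Type v} [Field k]

lemma asAlgebraHom_ofModule'_apply [Monoid G] (M : Type*) [AddCommGroup M] [Module k M]
    [Module k[G] M] [IsScalarTower k k[G] M] (a : k[G]) (x : M) :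
    (Representation.ofModule' M : Representation k G M).asAlgebraHom a x = a • x :=
  congr($((MonoidAlgebra.lift k _ G).apply_symm_apply (Algebra.lsmul k k M)) a x)

lemma isIrreducible_ofModule' [Monoid G] (M : Type*) [AddCommGroup M] [Module k M]
    [Module k[G] M] [IsScalarTower k k[G] M] [IsSimpleModule k[G] M] :
    (Representation.ofModule' M : Representation k G M).IsIrreducible :=
  let ρ : Representation k G M := Representation.ofModule' M
  let e : ρ.asModule ≃ₗ[k[G]] M :=
    { ρ.asModuleEquiv.toAddEquiv with
      map_smul' a x := asAlgebraHom_ofModule'_apply M a (ρ.asModuleEquiv x) }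
  (Representation.irreducible_iff_isSimpleModule_asModule ρ).2 (IsSimpleModule.congr e)

variable [Group G] [Finite G] [NeZero (Nat.card G : k)]

theorem eq_zero_of_forall_asAlgebraHom_eq_zero {a : k[G]}
    (ha : ∀ (V : Type max u v) [AddCommGroup V] [Module k V] [FiniteDimensional k V]
      (ρ : Representation k G V) [ρ.IsIrreducible], ρ.asAlgebraHom a = 0) : a = 0 := by
  suffices h : a ∈ Ring.jacobson k[G] by
    rwa [IsSemisimpleRing.jacobson_eq_bot, Ideal.mem_bot] at h
  rw [Ring.jacobson_eq_sInf_isMaximal, Submodule.mem_sInf]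
  intro m hm
  have : IsSimpleModule k[G] (k[G] ⧸ m) :=
    isSimpleModule_iff_isCoatom.2 (Ideal.isMaximal_def.1 hm)
  have := isIrreducible_ofModule' (k := k) (G := G) (k[G] ⧸ m)
  have h : a • (Submodule.Quotient.mk 1 : k[G] ⧸ m) = 0 := by
    rw [← asAlgebraHom_ofModule'_apply (k := k), ha _ (Representation.ofModule' _),
      LinearMap.zero_apply]
  rwa [← Submodule.Quotient.mk_smul, smul_eq_mul, mul_one, Submodule.Quotient.mk_eq_zero] at h

theorem eq_one_of_forall_apply_eq_one {g : G}
    (hg : ∀ (V : Type max u v) [AddCommGroup V] [Module k V] [FiniteDimensional k V]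
      (ρ : Representation k G V) [ρ.IsIrreducible], ρ g = 1) : g = 1 := by
  have h : (MonoidAlgebra.of k G g - MonoidAlgebra.of k G 1) = 0 :=
    eq_zero_of_forall_asAlgebraHom_eq_zero fun V _ _ _ ρ _ => by
      simp only [map_sub, Representation.asAlgebraHom_of, hg V ρ, map_one, sub_self]
  exact MonoidAlgebra.of_injective (sub_eq_zero.1 h)

end GroupAlgebra

section NormalSubgroup

variable {k G V : Type*} [Field k] [Group G] [AddCommGroup V] [Module k V]
  (ρ : Representation k G V) [ρ.IsIrreducible] (N : Subgroup G) [N.Normal]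

lemma le_ker_of_mem_invariants {v : V}
    (hv : v ∈ Representation.invariants (ρ.comp N.subtype)) (hv0 : v ≠ 0) : N ≤ ρ.ker := by
  let W : Subrepresentation ρ :=
    ⟨Representation.invariants (ρ.comp N.subtype), fun g _ hw => ρ.le_comap_invariants N g hw⟩
  have hW : W = ⊤ := (eq_bot_or_eq_top W).resolve_left fun h =>
    hv0 (show v ∈ (⊥ : Subrepresentation ρ) from h ▸ hv)
  intro x hx
  ext w
  exact (show w ∈ W from hW ▸ trivial) ⟨x, hx⟩

lemma norm_comp_subtype_eq_zero [Fintype N] (hN : ¬ N ≤ ρ.ker) :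
    Representation.norm (ρ.comp N.subtype) = 0 := by
  ext v
  by_contra hv
  exact hN (le_ker_of_mem_invariants ρ N
    (fun x => Representation.self_norm_apply (ρ.comp N.subtype) x v) hv)

lemma le_ker_of_forall_character_eq [CharZero k] [FiniteDimensional k V] [Finite N]
    (hN : ∀ x ∈ N, ρ.character x = ρ.character 1) : N ≤ ρ.ker := by
  by_contra hker
  have := Fintype.ofFinite N
  have := nontrivial_of_isIrreducible ρ
  have htrace := congrArg (LinearMap.trace k V) (norm_comp_subtype_eq_zero ρ N hker)
  have hchar (x : N) : LinearMap.trace k V (ρ x) = finrank k V := (hN x x.2).trans ρ.char_one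
  simp only [Representation.norm, map_sum, map_zero, MonoidHom.comp_apply, Subgroup.subtype_apply,
    hchar, Finset.sum_const, Finset.card_univ, smul_eq_zero] at htrace
  exact htrace.elim Fintype.card_ne_zero (by exact_mod_cast finrank_pos.ne')

end NormalSubgroup

section Subrepresentation

variable {k G V : Type*} [Field k] [Monoid G] [AddCommGroup V] [Module k V]

lemma exists_isAtom_subrepresentation [FiniteDimensional k V] [Nontrivial V]
    (σ : Representation k G V) : ∃ W : Subrepresentation σ, IsAtom W := by
  have hmono : StrictMono (Subrepresentation.toSubmodule : Subrepresentation σ → Submodule k V) :=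
    Monotone.strictMono_of_injective (fun _ _ h => h) Subrepresentation.toSubmodule_injective
  have : WellFoundedLT (Subrepresentation σ) := hmono.wellFoundedLT
  have : Nontrivial (Subrepresentation σ) :=
    ⟨⊥, ⊤, fun h => bot_ne_top (congrArg Subrepresentation.toSubmodule h)⟩
  exact IsAtomic.exists_atom _

variable {σ : Representation k G V}

lemma isIrreducible_toRepresentation {W : Subrepresentation σ} (hW : IsAtom W) :
    W.toRepresentation.IsIrreducible := by
  let incl (U : Subrepresentation W.toRepresentation) : Subrepresentation σ :=
    ⟨U.toSubmodule.map W.toSubmodule.subtype, by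
      rintro g _ ⟨u, hu, rfl⟩
      exact ⟨_, U.apply_mem_toSubmodule g hu, rfl⟩⟩
  have hne : (⊥ : Subrepresentation W.toRepresentation) ≠ ⊤ := fun h => hW.1 <|
    Subrepresentation.toSubmodule_injective <| Submodule.subsingleton_iff_eq_bot.1 <|
      (Submodule.subsingleton_iff k).1 <| subsingleton_of_bot_eq_top
        (congrArg Subrepresentation.toSubmodule h)
  refine { exists_pair_ne := ⟨_, _, hne⟩, eq_bot_or_eq_top := fun U => ?_ }
  have hle : incl U ≤ W := Submodule.map_subtype_le _ _
  have hinj := Submodule.map_injective_of_injective W.toSubmodule.subtype_injective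
  refine (hW.le_iff.1 hle).imp (fun h => ?_) (fun h => ?_) <;>
    refine Subrepresentation.toSubmodule_injective (hinj ?_)
  · exact (congrArg Subrepresentation.toSubmodule h).trans (Submodule.map_bot _).symm
  · exact (congrArg Subrepresentation.toSubmodule h).trans (Submodule.map_subtype_top _).symm

lemma dvd_finrank_sup_of_isAtom [FiniteDimensional k V] {ι : Type*}
    {A : ι → Subrepresentation σ} {d : ℕ} (hA : ∀ i, IsAtom (A i))
    (hd : ∀ i, d ∣ finrank k (A i).toSubmodule) (s : Finset ι) :
    d ∣ finrank k (s.sup A).toSubmodule := by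
  induction s using Finset.induction_on with
  | empty => exact (finrank_bot k V).symm ▸ dvd_zero d
  | insert i s _ ih =>
    rw [Finset.sup_insert]
    by_cases hle : A i ≤ s.sup A
    · rwa [sup_eq_right.2 hle]
    · have hdisj := (hA i).not_le_iff_disjoint.1 hle
      have h := Submodule.finrank_sup_add_finrank_inf_eq (A i).toSubmodule (s.sup A).toSubmodule
      rw [← Subrepresentation.toSubmodule_inf, hdisj.eq_bot] at h
      rw [Subrepresentation.toSubmodule_sup, ← add_zero (finrank k _), ← finrank_bot k V]
      exact h ▸ dvd_add (hd i) ih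

end Subrepresentation

section Clifford

variable {k G V : Type*} [Field k] [Group G] [AddCommGroup V] [Module k V]
  (ρ : Representation k G V) {N : Subgroup G} [N.Normal]

/-- The translate `g W` of an `N`-stable subspace `W` by an element `g` of a group in which `N` is
normal, as an automorphism of the lattice of `N`-stable subspaces. -/
def translateIso (g : G) :
    Subrepresentation (ρ.comp N.subtype) ≃o Subrepresentation (ρ.comp N.subtype) :=
  let translate (g : G) (W : Subrepresentation (ρ.comp N.subtype)) :
      Subrepresentation (ρ.comp N.subtype) :=
    ⟨W.toSubmodule.map (ρ g), by
      rintro x _ ⟨w, hw, rfl⟩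
      refine ⟨ρ (g⁻¹ * x * g) w,
        W.apply_mem_toSubmodule ⟨_, ‹N.Normal›.conj_mem' x x.2 g⟩ hw, ?_⟩
      simp [mul_assoc]⟩
  have hmono (g : G) : Monotone (translate g) := fun _ _ h => Submodule.map_mono h
  have hinv (g h : G) (hgh : g * h = 1) (W) : translate g (translate h W) = W :=
    Subrepresentation.toSubmodule_injective <| by
      simp only [translate, ← Submodule.map_comp, ← Module.End.mul_eq_comp, ← map_mul, hgh, map_one,
        Module.End.one_eq_id, Submodule.map_id]
  Equiv.toOrderIso ⟨translate g, translate g⁻¹, hinv _ _ (by simp), hinv _ _ (by simp)⟩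
    (hmono g) (hmono g⁻¹)

lemma toSubmodule_translateIso (g : G) (W : Subrepresentation (ρ.comp N.subtype)) :
    (translateIso ρ g W).toSubmodule = W.toSubmodule.map (ρ g) := rfl

lemma finrank_translateIso (g : G) (W : Subrepresentation (ρ.comp N.subtype)) :
    finrank k (translateIso ρ g W).toSubmodule = finrank k W.toSubmodule :=
  (Submodule.equivMapOfInjective _ (ρ.apply_bijective g).1 _).finrank_eq.symm

lemma translateIso_one (W : Subrepresentation (ρ.comp N.subtype)) : translateIso ρ 1 W = W :=
  Subrepresentation.toSubmodule_injective <| by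
    rw [toSubmodule_translateIso, map_one, Module.End.one_eq_id, Submodule.map_id]

lemma translateIso_mul (g h : G) (W : Subrepresentation (ρ.comp N.subtype)) :
    translateIso ρ (g * h) W = translateIso ρ g (translateIso ρ h W) :=
  Subrepresentation.toSubmodule_injective <| by
    simp only [toSubmodule_translateIso, map_mul, Module.End.mul_eq_comp, Submodule.map_comp]

lemma eq_top_of_forall_translateIso_le [ρ.IsIrreducible] {W : Subrepresentation (ρ.comp N.subtype)}
    (hW : W ≠ ⊥) (hstable : ∀ g, translateIso ρ g W ≤ W) : W = ⊤ := by
  let U : Subrepresentation ρ :=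
    ⟨W.toSubmodule, fun g _ hv => hstable g (Submodule.mem_map_of_mem hv)⟩
  have hU : U ≠ ⊥ := fun h => hW <|
    Subrepresentation.toSubmodule_injective (congrArg Subrepresentation.toSubmodule h :)
  exact Subrepresentation.toSubmodule_injective
    (congrArg Subrepresentation.toSubmodule ((eq_bot_or_eq_top U).resolve_left hU) :)

theorem finrank_dvd_finrank_of_isAtom [Finite G] [FiniteDimensional k V] [ρ.IsIrreducible]
    {W : Subrepresentation (ρ.comp N.subtype)} (hW : IsAtom W) :
    finrank k W.toSubmodule ∣ finrank k V := by
  have := Fintype.ofFinite G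
  set S := Finset.univ.sup fun g => translateIso ρ g W with hS
  have hle (g : G) : translateIso ρ g W ≤ S :=
    Finset.le_sup (f := fun g => translateIso ρ g W) (Finset.mem_univ g)
  have hne : S ≠ ⊥ := ne_bot_of_le_ne_bot hW.1 (translateIso_one ρ W ▸ hle 1)
  have hstable (g : G) : translateIso ρ g S ≤ S := by
    rw [hS, map_finset_sup]
    exact Finset.sup_le fun h _ => (translateIso_mul ρ g h W).symm.trans_le (hle _)
  have hdvd := dvd_finrank_sup_of_isAtom (fun g => ((translateIso ρ g).isAtom_iff W).2 hW)
    (fun g => (finrank_translateIso ρ g W).symm.dvd) Finset.univ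
  rw [← hS, eq_top_of_forall_translateIso_le ρ hne hstable] at hdvd
  exact finrank_top k V ▸ hdvd

end Clifford

section Counting

lemma card_preimage_of_surjective {A B : Type*} [Group A] [Group B] {f : A →* B}
    (hf : Function.Surjective f) (t : Set B) :
    Nat.card (f ⁻¹' t) = Nat.card f.ker * Nat.card t := by
  have e : f ⁻¹' t ≃ t × f.ker :=
    (Equiv.sigmaSubtypeFiberEquivSubtype f (p := (· ∈ f ⁻¹' t)) (q := (· ∈ t))
      fun _ => Iff.rfl).symm.trans
    ((Equiv.sigmaCongrRight fun b : t => f.fiberEquivKerOfSurjective hf b).trans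
      (Equiv.sigmaEquivProd _ _))
  rw [Nat.card_congr e, Nat.card_prod, mul_comm]

variable {G : Type*} [Group G] (K : Subgroup G) [K.Normal]

lemma card_commutator_mem :
    Nat.card {p : G × G // ⁅p.1, p.2⁆ ∈ K} =
      Nat.card K ^ 2 * (K.index * Nat.card (ConjClasses (G ⧸ K))) := by
  let f : G × G →* (G ⧸ K) × (G ⧸ K) := (QuotientGroup.mk' K).prodMap (QuotientGroup.mk' K)
  have hf : Function.Surjective f :=
    (QuotientGroup.mk'_surjective K).prodMap (QuotientGroup.mk'_surjective K)
  have hker : Nat.card f.ker = Nat.card K ^ 2 := by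
    rw [MonoidHom.ker_prodMap, QuotientGroup.ker_mk',
      Nat.card_congr (Subgroup.prodEquiv K K).toEquiv, Nat.card_prod, sq]
  have hpre (p : G × G) : ⁅p.1, p.2⁆ ∈ K ↔ p ∈ f ⁻¹' {q | Commute q.1 q.2} := by
    rw [← QuotientGroup.eq_one_iff]
    exact commutatorElement_eq_one_iff_commute (g₁ := (p.1 : G ⧸ K)) (g₂ := (p.2 : G ⧸ K))
  rw [Nat.card_congr (Equiv.subtypeEquivRight hpre)]
  refine (card_preimage_of_surjective hf _).trans ?_
  rw [hker, mul_comm K.index]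
  exact congrArg _ (card_comm_eq_card_conjClasses_mul_card (G ⧸ K))

end Counting

section Coefficients

variable {k : Type u} {G : Type v} [Semiring k] [Group G]

/-- The element `∑ ⁅x, y⁆` of `k[G]`, over all pairs `(x, y)`. It acts on an irreducible
representation of degree `d` as the scalar `(|G| / d) ^ 2`. -/
noncomputable def commutatorSum (k : Type u) (G : Type v) [Semiring k] [Group G] [Fintype G] :
    k[G] :=
  ∑ p : G × G, MonoidAlgebra.single ⁅p.1, p.2⁆ 1

/-- The sum in `k[G]` of the elements of a subgroup `K`. -/
noncomputable def subgroupSum (k : Type u) {G : Type v} [Semiring k] [Group G] (K : Subgroup G)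
    [Fintype K] : k[G] :=
  ∑ x : K, MonoidAlgebra.single (x : G) 1

lemma coeff_commutatorSum_one [Fintype G] :
    (commutatorSum k G).coeff 1 = Nat.card (ConjClasses G) * Nat.card G := by
  rw [← Nat.cast_mul, ← card_comm_eq_card_conjClasses_mul_card G]
  simp only [commutatorSum, MonoidAlgebra.coeff_sum, Finsupp.finsetSum_apply,
    MonoidAlgebra.coeff_single, Finsupp.single_apply, commutatorElement_eq_one_iff_commute,
    Finset.sum_boole, Nat.card_eq_fintype_card, Fintype.card_subtype]

lemma coeff_single_mul_subgroupSum_one (K : Subgroup G) [Fintype K] (g : G) :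
    (MonoidAlgebra.single g 1 * subgroupSum k K).coeff 1 = if g ∈ K then 1 else 0 := by
  simp only [subgroupSum, Finset.mul_sum, MonoidAlgebra.single_mul_single, mul_one,
    MonoidAlgebra.coeff_sum, Finsupp.finsetSum_apply, MonoidAlgebra.coeff_single,
    Finsupp.single_apply, mul_eq_one_iff_inv_eq]
  split_ifs with hg
  · rw [Fintype.sum_eq_single (⟨g, hg⟩⁻¹ : K), if_pos (by simp)]
    rintro x hx
    exact if_neg fun h => hx (Subtype.ext h.symm)
  · exact Finset.sum_eq_zero fun x _ => if_neg fun h => hg (inv_mem_iff.1 (h ▸ x.2))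

lemma coeff_subgroupSum_one (K : Subgroup G) [Fintype K] : (subgroupSum k K).coeff 1 = 1 := by
  simpa only [← MonoidAlgebra.one_def, one_mul, one_mem, if_true] using
    coeff_single_mul_subgroupSum_one (k := k) K 1

lemma coeff_commutatorSum_mul_subgroupSum_one [Fintype G] (K : Subgroup G) [K.Normal] :
    (commutatorSum k G * subgroupSum k K).coeff 1 =
      Nat.card K ^ 2 * (K.index * Nat.card (ConjClasses (G ⧸ K))) := by
  have hcount := congrArg (Nat.cast (R := k)) (card_commutator_mem K)
  push_cast at hcount
  rw [← hcount]
  simp only [commutatorSum, Finset.sum_mul, MonoidAlgebra.coeff_sum, Finsupp.finsetSum_apply,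
    coeff_single_mul_subgroupSum_one, Finset.sum_boole, Nat.card_eq_fintype_card,
    Fintype.card_subtype]

end Coefficients

section IndexDegrees

/-- Every irreducible representation of `G` over `k` that is nontrivial on `K` has degree `[G : K]`.
The universe of the representation spaces is that of `k[G]`, which is large enough for all
irreducible representations of a finite group. -/
def IndexDegreesAbove (k : Type u) {G : Type v} [Field k] [Group G] (K : Subgroup G) : Prop :=
  ∀ (V : Type max u v) [AddCommGroup V] [Module k V] [FiniteDimensional k V]
    (ρ : Representation k G V) [ρ.IsIrreducible], ¬ K ≤ ρ.ker → finrank k V = K.index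

variable {k : Type u} {G : Type v} [Field k] [Group G]

lemma asAlgebraHom_subgroupSum {V : Type*} [AddCommGroup V] [Module k V] (ρ : Representation k G V)
    (K : Subgroup G) [Fintype K] :
    ρ.asAlgebraHom (subgroupSum k K) = Representation.norm (ρ.comp K.subtype) := by
  simp only [subgroupSum, map_sum, Representation.asAlgebraHom_single_one]
  rfl

lemma asAlgebraHom_commutatorSum [IsAlgClosed k] [Fintype G] [NeZero (Nat.card G : k)]
    {V : Type*} [AddCommGroup V] [Module k V] [FiniteDimensional k V] (ρ : Representation k G V)
    [ρ.IsIrreducible] {K : Subgroup G} (hV : finrank k V = K.index) :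
    ρ.asAlgebraHom (commutatorSum k G) = (Nat.card K : k) ^ 2 • (1 : End k V) := by
  have hcard : (Nat.card G : k) = Nat.card K * K.index := by rw [← K.card_mul_index, Nat.cast_mul]
  have hindex : (K.index : k) ≠ 0 := right_ne_zero_of_mul (hcard ▸ NeZero.ne (Nat.card G : k))
  refine smul_right_injective _ (pow_ne_zero 2 hindex) ?_
  simp only [commutatorSum, map_sum, Representation.asAlgebraHom_single_one]
  rw [← hV, finrank_sq_smul_sum_commutator, hcard, hV, smul_smul, mul_pow, mul_comm]

lemma commutator_le_ker_of_finrank_eq_one {V : Type*} [AddCommGroup V] [Module k V]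
    (ρ : Representation k G V) (hV : finrank k V = 1) : commutator G ≤ ρ.ker := by
  rw [commutator_def, Subgroup.commutator_le]
  intro g _ h _
  obtain ⟨c, hc, -⟩ := LinearMap.existsUnique_eq_smul_id_of_finrank_eq_one hV (ρ g)
  have hcomm : ρ (g * h) = ρ (h * g) := by
    rw [map_mul, map_mul, hc, ← Module.End.one_eq_id, smul_mul_assoc, mul_smul_comm, one_mul,
      mul_one]
  rw [MonoidHom.mem_ker, commutatorElement_def, mul_assoc, ← mul_inv_rev, map_mul, hcomm, ← map_mul,
    mul_inv_cancel, map_one]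

namespace IndexDegreesAbove

variable {K : Subgroup G} [K.Normal] [IsAlgClosed k]

lemma commutatorSum_mul [Fintype G] [NeZero (Nat.card G : k)] (hK : IndexDegreesAbove k K) :
    commutatorSum k G * ((Nat.card K : k) • 1 - subgroupSum k K) =
      (Nat.card K : k) ^ 2 • ((Nat.card K : k) • 1 - subgroupSum k K) := by
  refine sub_eq_zero.1 (eq_zero_of_forall_asAlgebraHom_eq_zero fun V _ _ _ ρ _ => ?_)
  simp only [map_sub, map_mul, map_smul, map_one, asAlgebraHom_subgroupSum]
  by_cases hker : K ≤ ρ.ker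
  · have hnorm : Representation.norm (ρ.comp K.subtype) = (Nat.card K : k) • 1 := by
      have hone (x : K) : (ρ.comp K.subtype) x = 1 := hker x.2
      simp only [Representation.norm, hone, Finset.sum_const, Finset.card_univ,
        Nat.card_eq_fintype_card, Nat.cast_smul_eq_nsmul]
    simp only [hnorm, sub_self, mul_zero, smul_zero]
  · rw [norm_comp_subtype_eq_zero ρ K hker, asAlgebraHom_commutatorSum ρ (hK V ρ hker)]
    simp only [sub_zero, smul_mul_assoc, one_mul, sub_self]

variable [CharZero k] [Finite G]

lemma index_mul_card_conjClasses (hK : IndexDegreesAbove k K) :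
    K.index * Nat.card (ConjClasses G) + 1 =
      K.index * Nat.card (ConjClasses (G ⧸ K)) + Nat.card K := by
  have := Fintype.ofFinite G
  have hcoeff := congr(MonoidAlgebra.coeff $(hK.commutatorSum_mul) 1)
  simp only [mul_sub, mul_smul_comm, mul_one, MonoidAlgebra.coeff_sub, MonoidAlgebra.coeff_smul,
    Finsupp.sub_apply, Finsupp.smul_apply, smul_eq_mul, coeff_commutatorSum_one,
    coeff_commutatorSum_mul_subgroupSum_one, coeff_subgroupSum_one, MonoidAlgebra.coeff_one_one,
    ← K.card_mul_index, Nat.cast_mul] at hcoeff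
  have hne : (Nat.card K : k) ^ 2 ≠ 0 := pow_ne_zero 2 (Nat.cast_ne_zero.2 Nat.card_pos.ne')
  have hfactor : (Nat.card K : k) ^ 2 * (K.index * Nat.card (ConjClasses G) + 1) =
      (Nat.card K : k) ^ 2 * (K.index * Nat.card (ConjClasses (G ⧸ K)) + Nat.card K) := by
    linear_combination hcoeff
  exact_mod_cast mul_left_cancel₀ hne hfactor

lemma coprime_index_card (hK : IndexDegreesAbove k K) : K.index.Coprime (Nat.card K) := by
  have hgcd : K.index.gcd (Nat.card K) ∣ K.index * Nat.card (ConjClasses G) + 1 :=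
    hK.index_mul_card_conjClasses ▸
      dvd_add (dvd_mul_of_dvd_left (Nat.gcd_dvd_left _ _) _) (Nat.gcd_dvd_right _ _)
  exact Nat.dvd_one.1 <|
    (Nat.dvd_add_right (dvd_mul_of_dvd_left (Nat.gcd_dvd_left _ _) _)).1 hgcd

lemma finrank_eq_one_of_isAtom (hK : IndexDegreesAbove k K) {V : Type max u v} [AddCommGroup V]
    [Module k V] [FiniteDimensional k V] (ρ : Representation k G V) [ρ.IsIrreducible]
    (hker : ¬ K ≤ ρ.ker) {W : Subrepresentation (ρ.comp K.subtype)} (hW : IsAtom W) :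
    finrank k W.toSubmodule = 1 := by
  have := isIrreducible_toRepresentation hW
  have hindex : finrank k W.toSubmodule ∣ K.index :=
    hK V ρ hker ▸ finrank_dvd_finrank_of_isAtom ρ hW
  exact Nat.eq_one_of_dvd_coprimes hK.coprime_index_card hindex
    (finrank_dvd_card W.toRepresentation)

lemma commutator_le_ker (hK : IndexDegreesAbove k K) {V : Type max u v} [AddCommGroup V]
    [Module k V] [FiniteDimensional k V] (ρ : Representation k G V) [ρ.IsIrreducible] :
    ⁅K, K⁆ ≤ ρ.ker := by
  by_cases hker : K ≤ ρ.ker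
  · exact (Subgroup.commutator_le_self K).trans hker
  have := nontrivial_of_isIrreducible ρ
  obtain ⟨W, hW⟩ := exists_isAtom_subrepresentation (ρ.comp K.subtype)
  have htriv := commutator_le_ker_of_finrank_eq_one W.toRepresentation
    (hK.finrank_eq_one_of_isAtom ρ hker hW)
  obtain ⟨w, hw, hw0⟩ := W.toSubmodule.exists_mem_ne_zero_of_ne_bot
    fun h => hW.1 (Subrepresentation.toSubmodule_injective h)
  refine le_ker_of_mem_invariants ρ ⁅K, K⁆ (v := w) ?_ hw0
  rintro ⟨x, hx⟩
  rw [← Subgroup.map_subtype_commutator] at hx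
  obtain ⟨y, hy, rfl⟩ := hx
  exact congrArg Subtype.val congr($(htriv hy) ⟨w, hw⟩)

theorem commutator_eq_bot (hK : IndexDegreesAbove k K) : ⁅K, K⁆ = ⊥ := by
  refine (Subgroup.eq_bot_iff_forall _).2 fun g hg => eq_one_of_forall_apply_eq_one (k := k) ?_
  exact fun V _ _ _ ρ _ => hK.commutator_le_ker ρ hg

end IndexDegreesAbove

end IndexDegrees

section Characters

lemma isIrreducible_of_simple {k : Type u} {G : Type v} [Field k] [Monoid G] (V : FDRep k G)
    [CategoryTheory.Simple V] : Representation.IsIrreducible V.ρ := by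
  let incl (W : Subrepresentation V.ρ) : FDRep.of W.toRepresentation ⟶ V :=
    ⟨FGModuleCat.ofHom W.toSubmodule.subtype, fun g => rfl⟩
  have hmono (W : Subrepresentation V.ρ) : CategoryTheory.Mono (incl W) :=
    CategoryTheory.ConcreteCategory.mono_of_injective _ W.toSubmodule.subtype_injective
  have hbot_ne_top : (⊥ : Subrepresentation V.ρ) ≠ ⊤ := fun h => CategoryTheory.id_nonzero V <| by
    ext v
    exact (Submodule.mem_bot k).1 (show v ∈ (⊥ : Subrepresentation V.ρ) from h ▸ trivial)
  refine { exists_pair_ne := ⟨_, _, hbot_ne_top⟩, eq_bot_or_eq_top := fun W => ?_ }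
  refine or_iff_not_imp_left.2 fun hW => ?_
  have hne : incl W ≠ 0 := fun h => hW <| eq_bot_iff.2 fun w hw =>
    (Submodule.mem_bot k).2 congr($h ⟨w, hw⟩)
  have := CategoryTheory.isIso_of_mono_of_nonzero hne
  refine eq_top_iff.2 fun v _ => ?_
  obtain ⟨w, rfl⟩ := (FDRep.isoToLinearEquiv (CategoryTheory.asIso (incl W))).surjective v
  exact w.2

lemma apply_one_eq_one_of_isIrrChar {A : Type} [Group A] [Fintype A] [IsMulCommutative A]
    {ψ : A → ℂ} (hψ : IsIrrChar A ψ) : ψ 1 = 1 := by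
  obtain ⟨V, hV, hψ⟩ := hψ
  have := isIrreducible_of_simple V
  rw [hψ, FDRep.char_one]
  exact_mod_cast Representation.IsIrreducible.finrank_eq_one_of_isMulCommutative V.ρ

lemma isIrrChar_character {G : Type} [Group G] [Fintype G] {V : Type} [AddCommGroup V] [Module ℂ V]
    [FiniteDimensional ℂ V] (ρ : Representation ℂ G V) [ρ.IsIrreducible] :
    IsIrrChar G ρ.character :=
  ⟨FDRep.of ρ, (FDRep.simple_iff_char_is_norm_one _).2 (sum_character_mul_character_inv ρ),
    fun _ => rfl⟩

lemma indexDegreesAbove_of_isIrrChar {G : Type} [Group G] [Fintype G] {K : Subgroup G} [K.Normal]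
    (hdeg : ∀ χ : G → ℂ, IsIrrChar G χ → ¬ (∀ x ∈ K, χ x = χ 1) → χ 1 = (K.index : ℂ)) :
    IndexDegreesAbove ℂ K := by
  intro V _ _ _ ρ _ hker
  have hdim := hdeg _ (isIrrChar_character ρ) (hker ∘ le_ker_of_forall_character_eq ρ K)
  rw [ρ.char_one] at hdim
  exact_mod_cast hdim

end Characters

end

theorem stmt18_general (G : Type) [Group G] [Fintype G] (K : Subgroup G) [K.Normal]
    (hdeg : ∀ χ : G → ℂ, IsIrrChar G χ → ¬ (∀ x ∈ K, χ x = χ 1) → χ 1 = (K.index : ℂ)) :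
    (∀ ψ : ↥K → ℂ, IsIrrChar ↥K ψ → ψ 1 = 1) ∧ ∀ x ∈ K, ∀ y ∈ K, x * y = y * x := by
  have hcomm : ∀ x ∈ K, ∀ y ∈ K, x * y = y * x := fun x hx y hy =>
    (Subgroup.mem_centralizer_iff.1 (Subgroup.commutator_eq_bot_iff_le_centralizer.1
      (indexDegreesAbove_of_isIrrChar hdeg).commutator_eq_bot hy) x hx)
  have : IsMulCommutative K := ⟨⟨fun x y => Subtype.ext (hcomm x x.2 y y.2)⟩⟩
  exact ⟨fun ψ hψ => apply_one_eq_one_of_isIrrChar hψ, hcomm⟩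

/-- If every irreducible character of the Frobenius group `G` not containing the kernel `K` in
its kernel has degree `[G:K]`, then every non-trivial irreducible character of `K` is linear and
`K` is Abelian. -/
theorem stmt18 (G : Type) [Group G] [Fintype G] (K H : Subgroup G)
    (hF : IsFrobeniusWith K H)
    (hdeg : ∀ χ : G → ℂ, IsIrrChar G χ → ¬ (∀ x ∈ K, χ x = χ 1) → χ 1 = (K.index : ℂ)) :
    (∀ ψ : ↥K → ℂ, IsIrrChar ↥K ψ → ψ ≠ (fun _ => 1) → ψ 1 = 1) ∧
      ∀ x ∈ K, ∀ y ∈ K, x * y = y * x := by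
  have := hF.1
  exact (stmt18_general G K hdeg).imp_left fun hlin ψ hψ _ => hlin ψ hψ
end
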